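/- arXiv:2207.08066 — 3 statements merged into one kernel-verified Lean document; each statement's English description precedes it below -/
import Mathlib

section
/- Let L ≥ 1 and let η ∈ S_L (so M = 0). Then T_L(η) ∈ S_L; in particular 0 ≤ (T_L(η))_j ≤ L for all j, (T_L(η))_0 = 0, (T_L(η))_j = 0 for all sufficiently large j, ∑_{j=0}^{i}(L − (T_L(η))_j) ≥ ∑_{j=0}^{i+1} (T_L(η))_j for every i ≥ 0, and moreover ∑_{j=0}^{∞} (T_L(η))_j = ∑_{j=0}^{∞} η_j. -/
namespace BBS

attribute [local instance] Classical.propDecidable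

noncomputable section

/-- Carrier sequence with initial load `m` for box capacity `L`. -/
def carrierM (L m : ℤ) (η : ℕ → ℤ) : ℕ → ℤ
  | 0 => m
  | j + 1 => η j + max 0 (η j + carrierM L m η j - L)

/-- Carrier sequence (initial load `0`). -/
def carrier (L : ℤ) (η : ℕ → ℤ) : ℕ → ℤ := carrierM L 0 η

/-- Time evolution `T_L`. -/
def evol (L : ℤ) (η : ℕ → ℤ) (j : ℕ) : ℤ := min (L - η j) (carrier L η j)

/-- Time evolution `T_1^m` on binary sequences. -/
def evolOne (m : ℤ) (w : ℕ → ℤ) (j : ℕ) : ℤ := min (1 - w j) (carrierM 1 m w j)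

/-- Membership in `S_{L,M}`. -/
def mem_S (L M : ℤ) (η : ℕ → ℤ) : Prop :=
  (∃ N : ℕ, ∀ j, N ≤ j → η j = 0) ∧
  (∀ j, -M ≤ η j ∧ η j ≤ L + M) ∧
  η 0 ≤ 0 ∧
  (∀ j, max (-η j) (η j - L) ≤ M) ∧
  (∃ j, max (-η j) (η j - L) = M) ∧
  (∀ i : ℕ, ∑ j ∈ Finset.range (i + 2), η j ≤ ∑ j ∈ Finset.range (i + 1), (L - η j))

/-- Auxiliary sequence for the backward carrier. -/
def backAux (L : ℤ) (η : ℕ → ℤ) (x : ℕ) : ℕ → ℤ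
  | 0 => 0
  | n + 1 => η (x - n - 1) + max 0 (η (x - n - 1) + backAux L η x n - L)

/-- Backward carrier `ū` computed from the index `x`. -/
def backCarrier (L : ℤ) (η : ℕ → ℤ) (x j : ℕ) : ℤ :=
  if x ≤ j then 0 else backAux L η x (x - j)

/-- Reverse time evolution `R_L` computed from the index `x`. -/
def revol (L : ℤ) (η : ℕ → ℤ) (x j : ℕ) : ℤ :=
  if j < x then min (L - η j) (backCarrier L η x (j + 1)) else 0

/-- The concatenated word sequence `r_K(η)`. -/
def rSeq (L M : ℕ) (K : Set ℕ) (η : ℕ → ℤ) (n : ℕ) : ℤ :=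
  if (n / (L + 2 * M) ∈ K ∧ ((n % (L + 2 * M) : ℕ) : ℤ) < η (n / (L + 2 * M)) + M) ∨
      (n / (L + 2 * M) ∉ K ∧
        (L : ℤ) + 2 * M - (η (n / (L + 2 * M)) + M) ≤ ((n % (L + 2 * M) : ℕ) : ℤ))
  then 1 else 0

/-- The concatenated word sequence `l_K(η)`. -/
def lSeq (L M : ℕ) (K : Set ℕ) (η : ℕ → ℤ) (n : ℕ) : ℤ :=
  if (n / (L + 2 * M) ∈ K ∧
        (L : ℤ) + 2 * M - (η (n / (L + 2 * M)) + M) ≤ ((n % (L + 2 * M) : ℕ) : ℤ)) ∨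
      (n / (L + 2 * M) ∉ K ∧ ((n % (L + 2 * M) : ℕ) : ℤ) < η (n / (L + 2 * M)) + M)
  then 1 else 0

/-- Soliton flag sequence `a(η)`. -/
def flag (L : ℤ) (η : ℕ → ℤ) : ℕ → ℤ
  | 0 => 0
  | j + 1 =>
    if η j + η (j + 1) < L then 0
    else if η j + η (j + 1) = L then flag L η j else 1

/-- Primed soliton flag sequence `a′(η)` (with the convention `a′_{-1} = 0`). -/
def flag' (L : ℤ) (η : ℕ → ℤ) : ℕ → ℤ
  | 0 => if η 0 + η 1 < L then 0 else if η 0 + η 1 = L then 0 else 1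
  | j + 1 =>
    if η (j + 1) + η (j + 2) < L then 0
    else if η (j + 1) + η (j + 2) = L then flag' L η j else 1

/-- `I(η)`: right ends of contiguous 1-segments. -/
def Iset (L : ℤ) (η : ℕ → ℤ) : Set ℕ := {j | flag L η j = 1 ∧ flag L η (j + 1) = 0}

/-- `I′(η)`: left ends of contiguous right-1-segments. -/
def Iset' (L : ℤ) (η : ℕ → ℤ) : Set ℕ :=
  {j | (∀ k, j = k + 1 → flag' L η k = 0) ∧ flag' L η j = 1}

def marked (L : ℤ) (η : ℕ → ℤ) (j : ℕ) : Prop := j ∈ Iset L η ∨ j + 1 ∈ Iset L η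

def marked' (L : ℤ) (η : ℕ → ℤ) (j : ℕ) : Prop :=
  j ∈ Iset' L η ∨ ∃ k, j = k + 1 ∧ k ∈ Iset' L η

/-- Arc-count sequence `b̃(η)`. -/
def btilde (L M : ℕ) (η : ℕ → ℤ) (j : ℕ) : ℤ :=
  if marked (L : ℤ) η j then 0
  else min (η j + M) ((L : ℤ) + 2 * M - (η (j + 1) + M))

/-- `b̃_{j-1}` with the convention `b̃_{-1} = 0`. -/
def bprev (L M : ℕ) (η : ℕ → ℤ) : ℕ → ℤ
  | 0 => 0
  | j + 1 => btilde L M η j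

/-- Primed arc-count sequence `b̃′(η)`. -/
def btilde' (L M : ℕ) (η : ℕ → ℤ) : ℕ → ℤ
  | 0 => if marked' (L : ℤ) η 0 then 0 else η 0 + M
  | j + 1 =>
    if marked' (L : ℤ) η (j + 1) then 0
    else min (η (j + 1) + M) ((L : ℤ) + 2 * M - (η j + M))

/-- Background sequence `c(η)`: subsequence of `b̃` on unmarked indices, lowered by `M`. -/
def bg (L M : ℕ) (η : ℕ → ℤ) (j : ℕ) : ℤ :=
  btilde L M η (Nat.nth (fun i => ¬ marked (L : ℤ) η i) j) - M

/-- Primed background sequence `c′(η)`. -/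
def bg' (L M : ℕ) (η : ℕ → ℤ) (j : ℕ) : ℤ :=
  btilde' L M η (Nat.nth (fun i => ¬ marked' (L : ℤ) η i) j) - M

/-- Length of the word corresponding to box `j` in `d̃(η)`. -/
def wordLen (L M : ℕ) (η : ℕ → ℤ) (j : ℕ) : ℕ :=
  if j ∈ Iset (L : ℤ) η then L + 2 * M
  else ((L : ℤ) + 2 * M - bprev L M η j - btilde L M η j).toNat

def wordStart (L M : ℕ) (η : ℕ → ℤ) (j : ℕ) : ℕ :=
  ∑ k ∈ Finset.range j, wordLen L M η k

/-- Raised soliton word sequence `d̃(η)`. -/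
def dTilde (L M : ℕ) (η : ℕ → ℤ) (n : ℕ) : ℤ :=
  if ∃ j, wordStart L M η j ≤ n ∧ n < wordStart L M η (j + 1) ∧
      ((j ∈ Iset (L : ℤ) η ∧ ((n - wordStart L M η j : ℕ) : ℤ) < η j + M) ∨
        (j ∉ Iset (L : ℤ) η ∧
          (L : ℤ) + 2 * M - (η j + M) - bprev L M η j ≤ ((n - wordStart L M η j : ℕ) : ℤ)))
  then 1 else 0

/-- Length of the word corresponding to box `j` in `d̃′(η)`. -/
def wordLen' (L M : ℕ) (η : ℕ → ℤ) (j : ℕ) : ℕ :=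
  if j ∈ Iset' (L : ℤ) η then L + 2 * M
  else ((L : ℤ) + 2 * M - btilde' L M η j - btilde' L M η (j + 1)).toNat

def wordStart' (L M : ℕ) (η : ℕ → ℤ) (j : ℕ) : ℕ :=
  ∑ k ∈ Finset.range j, wordLen' L M η k

/-- Primed raised soliton word sequence `d̃′(η)`. -/
def dTilde' (L M : ℕ) (η : ℕ → ℤ) (n : ℕ) : ℤ :=
  if ∃ j, wordStart' L M η j ≤ n ∧ n < wordStart' L M η (j + 1) ∧
      ((j ∈ Iset' (L : ℤ) η ∧
          (L : ℤ) + 2 * M - (η j + M) ≤ ((n - wordStart' L M η j : ℕ) : ℤ)) ∨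
        (j ∉ Iset' (L : ℤ) η ∧
          ((n - wordStart' L M η j : ℕ) : ℤ) < η j + M - btilde' L M η j))
  then 1 else 0

/-- The sequence `0^{s 1}1^{t 1}0^{s 2}1^{t 2}⋯0^{s N}1^{t N}0^∞`. -/
def runSeq (N : ℕ) (s t : ℕ → ℕ) (n : ℕ) : ℤ :=
  if ∃ m, 1 ≤ m ∧ m ≤ N ∧
      (∑ k ∈ Finset.Icc 1 (m - 1), (s k + t k)) + s m ≤ n ∧
      n < ∑ k ∈ Finset.Icc 1 m, (s k + t k)
  then 1 else 0

/-- `w = 0^{s 1}1^{t 1}⋯1^{t N}0^∞` is the (maximal) run decomposition of `w`. -/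
def IsRunDecomp (N : ℕ) (s t : ℕ → ℕ) (w : ℕ → ℤ) : Prop :=
  (∀ m, 1 ≤ m → m ≤ N → 1 ≤ t m) ∧ (∀ m, 2 ≤ m → m ≤ N → 1 ≤ s m) ∧ w = runSeq N s t

def shrinkS (M : ℕ) (s : ℕ → ℕ) (m : ℕ) : ℕ := if m = 1 then s 1 - M else s m - 2 * M

def shrinkT (M : ℕ) (t : ℕ → ℕ) (m : ℕ) : ℕ := t m - 2 * M

/-- `d` is the soliton sequence `d(η)`. -/
def IsSolitonSeq (L M : ℕ) (η : ℕ → ℤ) (d : ℕ → ℤ) : Prop :=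
  ∃ N s t, IsRunDecomp N s t (dTilde L M η) ∧ d = runSeq N (shrinkS M s) (shrinkT M t)

/-- `d` is the primed soliton sequence `d′(η)`. -/
def IsSolitonSeq' (L M : ℕ) (η : ℕ → ℤ) (d : ℕ → ℤ) : Prop :=
  ∃ N s t, IsRunDecomp N s t (dTilde' L M η) ∧ d = runSeq N (shrinkS M s) (shrinkT M t)

/-- Forward shift `Λ`. -/
def lam (c : ℕ → ℤ) : ℕ → ℤ
  | 0 => 0
  | j + 1 => c j

/-- Membership in the background space `S^{(b)}_{L,M}`. -/
def mem_Sb (L M : ℤ) (c : ℕ → ℤ) : Prop := mem_S L M c ∧ ∀ j, c j + c (j + 1) ≤ L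

/-- Membership in the soliton space `S^{(f)}_L`: a binary sequence with finitely many
ones all of whose maximal runs of equal letters have length greater than `L`. -/
def mem_Sf (L : ℕ) (w : ℕ → ℤ) : Prop :=
  (∀ n, w n = 0 ∨ w n = 1) ∧ (∃ N : ℕ, ∀ n, N ≤ n → w n = 0) ∧
  ∀ n m : ℕ, n ≤ m → (∀ j, n ≤ j → j ≤ m → w j = w n) →
    (n = 0 ∨ w (n - 1) ≠ w n) → w (m + 1) ≠ w m → L < m + 1 - n

/-- Stages of the iterative arc-pairing construction: at each stage, connect every pair
`i < j` of yet-unpaired positions with `w i = a`, `w j = b` such that every position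
strictly between them is already paired. -/
def arcStage (a b : ℤ) (w : ℕ → ℤ) : ℕ → Set (ℕ × ℕ)
  | 0 => ∅
  | k + 1 => arcStage a b w k ∪
      {p : ℕ × ℕ | p.1 < p.2 ∧ w p.1 = a ∧ w p.2 = b ∧
        (∀ q ∈ arcStage a b w k, p.1 ≠ q.1 ∧ p.1 ≠ q.2 ∧ p.2 ≠ q.1 ∧ p.2 ≠ q.2) ∧
        (∀ m, p.1 < m → m < p.2 → ∃ q ∈ arcStage a b w k, m = q.1 ∨ m = q.2)}

/-- The arc pairing: `arcPairing 1 0 w` is the 10-arc pairing of `w`, and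
`arcPairing 0 1 w` is the 01-arc pairing of `w`. -/
def arcPairing (a b : ℤ) (w : ℕ → ℤ) : Set (ℕ × ℕ) := ⋃ k, arcStage a b w k

/-- Extension of `η` to integer indices with `η_j = L` for `j < 0`. -/
def etaExt (L : ℕ) (η : ℕ → ℤ) (j : ℤ) : ℤ := if j < 0 then (L : ℤ) else η j.toNat

end

end BBS

open BBS

/-! A carrier passes along the boxes. At box `j` the balls present, `η j + u j`, are split between
the box, which keeps `min (L - η j) (u j)`, and the carrier, since
`max 0 (η j + u j - L) + min (L - η j) (u j) = u j`. Telescoping, the partial sums of `T_L η` fall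
short of those of `η` by exactly the carrier load. Past the support of `η` the load decreases by `L`
at each box until it is `0`, so the evolved state has finite support and the same total. Writing the
partial-sum condition as `2 * (η 0 + ⋯ + η i) + η (i + 1) ≤ (i + 1) * L`, evolution lowers the first
term by `2 * u (i + 1)` and replaces the second by at most `u (i + 1)`, where `η i ≤ u (i + 1)`. -/

open Filter Finset

namespace BBS

variable {L m : ℤ} {η : ℕ → ℤ}

theorem le_carrierM_succ (L m : ℤ) (η : ℕ → ℤ) (j : ℕ) : η j ≤ carrierM L m η (j + 1) :=
  le_add_of_nonneg_right (le_max_left _ _)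

theorem carrierM_nonneg (hm : 0 ≤ m) (hη : ∀ j, 0 ≤ η j) : ∀ j, 0 ≤ carrierM L m η j
  | 0 => hm
  | j + 1 => (hη j).trans (le_carrierM_succ L m η j)

theorem carrierM_add_succ_of_eq_zero (hL : 0 ≤ L) {N : ℕ} (hN : ∀ j, N ≤ j → η j = 0) (k : ℕ) :
    carrierM L m η (N + (k + 1)) = max 0 (carrierM L m η N - (k + 1) * L) := by
  have unload (j : ℕ) :
      carrierM L m η (N + j + 1) = max 0 (carrierM L m η (N + j) - L) := by
    rw [carrierM, hN (N + j) (Nat.le_add_right N j), zero_add, zero_add]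
  induction k with
  | zero => simpa using unload 0
  | succ k ih =>
    rw [← add_assoc N, unload, ih]
    push_cast
    rw [add_one_mul ((k : ℤ) + 1)]
    omega

theorem eventually_carrierM_eq_zero (hL : 0 < L) (hη : ∀ᶠ j in atTop, η j = 0) :
    ∀ᶠ j in atTop, carrierM L m η j = 0 := by
  obtain ⟨N, hN⟩ := eventually_atTop.mp hη
  filter_upwards [eventually_ge_atTop (N + ((carrierM L m η N).toNat + 1))] with j hj
  obtain ⟨k, rfl⟩ := Nat.exists_eq_add_of_le hj
  rw [show N + ((carrierM L m η N).toNat + 1) + k = N + ((carrierM L m η N).toNat + k + 1) by ring,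
    carrierM_add_succ_of_eq_zero hL.le hN, max_eq_left]
  have load_le : carrierM L m η N ≤ (carrierM L m η N).toNat := Int.self_le_toNat _
  push_cast
  nlinarith

theorem evol_add_carrier_succ (L : ℤ) (η : ℕ → ℤ) (j : ℕ) :
    evol L η j + carrier L η (j + 1) = η j + carrier L η j := by
  simp only [evol, carrier, carrierM]
  omega

theorem sum_range_evol_add_carrier (L : ℤ) (η : ℕ → ℤ) (n : ℕ) :
    ∑ j ∈ range n, evol L η j + carrier L η n = ∑ j ∈ range n, η j := by
  induction n with
  | zero => rfl
  | succ n ih =>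
    rw [sum_range_succ, sum_range_succ, add_assoc, evol_add_carrier_succ, ← ih]
    ring

theorem evol_nonneg (hη : ∀ j, 0 ≤ η j) {j : ℕ} (hj : η j ≤ L) : 0 ≤ evol L η j :=
  le_min (sub_nonneg.mpr hj) (carrierM_nonneg le_rfl hη j)

theorem evol_le {j : ℕ} (hj : 0 ≤ η j) : evol L η j ≤ L :=
  (min_le_left _ _).trans (sub_le_self L hj)

theorem evol_zero (h0 : η 0 ≤ L) : evol L η 0 = 0 :=
  min_eq_right (sub_nonneg.mpr h0)

theorem eventually_evol_eq_zero (hL : 0 < L) (hη : ∀ᶠ j in atTop, η j = 0) :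
    ∀ᶠ j in atTop, evol L η j = 0 := by
  filter_upwards [hη, eventually_carrierM_eq_zero hL hη] with j hj hcarrier
  rw [evol, carrier, hj, hcarrier, sub_zero, min_eq_right hL.le]

theorem tsum_evol (hL : 0 < L) (hη : ∀ᶠ j in atTop, η j = 0) :
    ∑' j, evol L η j = ∑' j, η j := by
  obtain ⟨N, hN⟩ := eventually_atTop.mp
    ((hη.and (eventually_evol_eq_zero hL hη)).and (eventually_carrierM_eq_zero (m := 0) hL hη))
  have notMem_range {j : ℕ} (hj : j ∉ range N) : N ≤ j := by simpa using hj
  have carrier_eq_zero : carrier L η N = 0 := (hN N le_rfl).2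
  calc ∑' j, evol L η j
      = ∑ j ∈ range N, evol L η j := tsum_eq_sum fun j hj ↦ (hN j (notMem_range hj)).1.2
    _ = ∑ j ∈ range N, η j := by
      rw [← sum_range_evol_add_carrier L η N, carrier_eq_zero, add_zero]
    _ = ∑' j, η j := (tsum_eq_sum fun j hj ↦ (hN j (notMem_range hj)).1.1).symm

theorem sum_range_evol_le {i : ℕ} (hpair : 0 ≤ η i + η (i + 1))
    (hη : ∑ j ∈ range (i + 2), η j ≤ ∑ j ∈ range (i + 1), (L - η j)) :
    ∑ j ∈ range (i + 2), evol L η j ≤ ∑ j ∈ range (i + 1), (L - evol L η j) := by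
  have deficit := sum_range_evol_add_carrier L η (i + 1)
  have evol_le_carrier : evol L η (i + 1) ≤ carrier L η (i + 1) := min_le_right _ _
  have le_carrier : η i ≤ carrier L η (i + 1) := le_carrierM_succ L 0 η i
  rw [sum_range_succ, sum_sub_distrib] at hη ⊢
  linarith

theorem mem_S_zero_iff :
    mem_S L 0 η ↔
      (∃ N : ℕ, ∀ j, N ≤ j → η j = 0) ∧ (∀ j, 0 ≤ η j ∧ η j ≤ L) ∧ η 0 = 0 ∧
        ∀ i : ℕ, ∑ j ∈ range (i + 2), η j ≤ ∑ j ∈ range (i + 1), (L - η j) := by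
  simp only [mem_S, neg_zero, add_zero]
  constructor
  · rintro ⟨hfin, hbounds, h0, -, -, hsum⟩
    exact ⟨hfin, hbounds, h0.antisymm (hbounds 0).1, hsum⟩
  · rintro ⟨hfin, hbounds, h0, hsum⟩
    have hexcess (j : ℕ) : max (-η j) (η j - L) ≤ 0 :=
      max_le (neg_nonpos.mpr (hbounds j).1) (sub_nonpos.mpr (hbounds j).2)
    exact ⟨hfin, hbounds, h0.le, hexcess,
      ⟨0, (hexcess 0).antisymm (le_max_of_le_left (by rw [h0, neg_zero]))⟩, hsum⟩

theorem mem_S_evol (hL : 0 < L) (hη : mem_S L 0 η) : mem_S L 0 (evol L η) := by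
  obtain ⟨hfin, hbounds, -, hsum⟩ := mem_S_zero_iff.mp hη
  have hnonneg (j : ℕ) : 0 ≤ η j := (hbounds j).1
  have hle (j : ℕ) : η j ≤ L := (hbounds j).2
  exact mem_S_zero_iff.mpr
    ⟨eventually_atTop.mp (eventually_evol_eq_zero hL (eventually_atTop.mpr hfin)),
      fun j ↦ ⟨evol_nonneg hnonneg (hle j), evol_le (hnonneg j)⟩,
      evol_zero (hle 0),
      fun i ↦ sum_range_evol_le (add_nonneg (hnonneg i) (hnonneg (i + 1))) (hsum i)⟩

end BBS

/-- `T_L` maps `S_L` to itself and conserves the total number of balls. -/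
theorem stmt_0 (L : ℕ) (hL : 1 ≤ L) (η : ℕ → ℤ) (hη : mem_S L 0 η) :
    mem_S L 0 (evol L η) ∧
    (∀ j, 0 ≤ evol L η j ∧ evol L η j ≤ L) ∧
    evol L η 0 = 0 ∧
    (∃ N : ℕ, ∀ j, N ≤ j → evol L η j = 0) ∧
    (∀ i : ℕ, ∑ j ∈ Finset.range (i + 2), evol L η j ≤
      ∑ j ∈ Finset.range (i + 1), ((L : ℤ) - evol L η j)) ∧
    (∑' j : ℕ, evol L η j) = ∑' j : ℕ, η j := by
  have hLpos : (0 : ℤ) < L := by exact_mod_cast hL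
  have hevol := mem_S_evol hLpos hη
  obtain ⟨hfin, hbounds, hzero, hsum⟩ := mem_S_zero_iff.mp hevol
  exact ⟨hevol, hbounds, hzero, hfin, hsum, tsum_evol hLpos (eventually_atTop.mpr hη.1)⟩
end

section
/- Let η ∈ S_{L,M} with carrier u, set J(η) = {j ∈ ℕ | η_j + u_j ≥ L}, let x satisfy η_j = 0 and u_j(η) = 0 for all j ≥ x, let ū be the backward carrier of T_L(η) computed from x, and set J′(T_L(η)) = {j ∈ ℕ | (T_L(η))_j + ū_{j+1} ≥ L}. Then η_j + u_j = (T_L(η))_j + u_{j+1} for every j, and J(η) = J′(T_L(η)). -/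
namespace BBS

attribute [local instance] Classical.propDecidable

end BBS

open BBS

/-!
One step of the dynamics replaces `(η_j, u_j)` by `((T_L η)_j, u_{j+1})`, where the first entry is
`min (L - η_j) u_j`. This local map preserves the sum `s` of its two entries, and
`u_j = min (L - η_j) u_j + max 0 (s - L)`. Hence it is undone by the rule that defines the backward
carrier of `T_L η`, and descending from a position where both carriers vanish shows that they agree
everywhere.
-/

namespace BBS

theorem carrier_succ (L : ℤ) (η : ℕ → ℤ) (j : ℕ) :
    carrier L η (j + 1) = η j + max 0 (η j + carrier L η j - L) := rfl

theorem backCarrier_of_le (L : ℤ) (η : ℕ → ℤ) {x j : ℕ} (h : x ≤ j) :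
    backCarrier L η x j = 0 :=
  if_pos h

theorem backCarrier_eq_backAux (L : ℤ) (η : ℕ → ℤ) (x j : ℕ) :
    backCarrier L η x j = backAux L η x (x - j) := by
  rcases le_or_gt x j with h | h
  · rw [backCarrier_of_le L η h, Nat.sub_eq_zero_of_le h, backAux]
  · exact if_neg h.not_ge

theorem backCarrier_of_lt (L : ℤ) (η : ℕ → ℤ) {x j : ℕ} (h : j < x) :
    backCarrier L η x j = η j + max 0 (η j + backCarrier L η x (j + 1) - L) := by
  have distance_succ : x - j = x - (j + 1) + 1 := by omega
  have index_eq : x - (x - (j + 1)) - 1 = j := by omega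
  rw [backCarrier_eq_backAux, backCarrier_eq_backAux, distance_succ, backAux, index_eq]

theorem add_carrier_eq_evol_add_carrier_succ (L : ℤ) (η : ℕ → ℤ) (j : ℕ) :
    η j + carrier L η j = evol L η j + carrier L η (j + 1) := by
  rw [carrier_succ, evol]
  omega

theorem carrier_eq_evol_add_max (L : ℤ) (η : ℕ → ℤ) (j : ℕ) :
    carrier L η j = evol L η j + max 0 (evol L η j + carrier L η (j + 1) - L) := by
  rw [← add_carrier_eq_evol_add_carrier_succ, evol]
  omega

theorem backCarrier_evol_of_le {L : ℤ} {η : ℕ → ℤ} {x j : ℕ} (hx : carrier L η x = 0)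
    (hj : j ≤ x) : backCarrier L (evol L η) x j = carrier L η j := by
  induction hj using Nat.decreasingInduction with
  | self => rw [backCarrier_of_le L _ le_rfl, hx]
  | of_succ j hj ih => rw [backCarrier_of_lt L _ hj, ih, ← carrier_eq_evol_add_max]

theorem backCarrier_evol {L : ℤ} {η : ℕ → ℤ} {x : ℕ} (hx : ∀ j, x ≤ j → carrier L η j = 0) :
    backCarrier L (evol L η) x = carrier L η := by
  funext j
  rcases le_total j x with hj | hj
  · exact backCarrier_evol_of_le (hx x le_rfl) hj
  · rw [backCarrier_of_le L _ hj, hx j hj]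

end BBS

theorem stmt_4_general (L : ℤ) (η : ℕ → ℤ) (x : ℕ) (hx : ∀ j, x ≤ j → carrier L η j = 0) :
    (∀ j, η j + carrier L η j = evol L η j + carrier L η (j + 1)) ∧
    {j : ℕ | L ≤ η j + carrier L η j} =
      {j : ℕ | L ≤ evol L η j + backCarrier L (evol L η) x (j + 1)} := by
  refine ⟨add_carrier_eq_evol_add_carrier_succ L η, ?_⟩
  simp only [backCarrier_evol hx, add_carrier_eq_evol_add_carrier_succ L η]

/-- `η_j + u_j = (T_L η)_j + u_{j+1}` and `J(η) = J′(T_L(η))`. -/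
theorem stmt_4 (L M : ℕ) (hL : 1 ≤ L) (η : ℕ → ℤ) (hη : mem_S L M η)
    (x : ℕ) (hx : ∀ j, x ≤ j → η j = 0 ∧ carrier L η j = 0) :
    (∀ j, η j + carrier L η j = evol L η j + carrier L η (j + 1)) ∧
    {j : ℕ | (L : ℤ) ≤ η j + carrier L η j} =
      {j : ℕ | (L : ℤ) ≤ evol L η j + backCarrier L (evol L η) x (j + 1)} :=
  stmt_4_general L η x fun j hj => (hx j hj).2
end

section
/- (Lemma 2.7) For every η ∈ S_{L,M} and every j ≥ 0, the following are equivalent: (i) a(η)_j = 1 and a(η)_{j+1} = 0; (ii) a′(T_L(η))_{j−1} = 0 and a′(T_L(η))_j = 1 (with a′_{−1} = 0). Equivalently, I(η) = I′(T_L(η)). -/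
namespace BBS

attribute [local instance] Classical.propDecidable

end BBS

open BBS

/-!
Call `s j = η j + u j - L` the excess at box `j` and put `d j = η j + η (j + 1) - L`. The recursion
of the carrier becomes `s (j + 1) = d j + max 0 (s j)`, and the evolved state satisfies
`T j + T (j + 1) - L = min 0 (s j) + min (-d j) (max 0 (s j))`. As long as the excess is positive,
the flags of `η` and of `T` are therefore driven by opposite quantities and add up to `1`, while the
flag of `η` vanishes wherever the excess is not positive. A falling edge of the former is then a
rising edge of the latter; the primed flags are the unprimed ones with the index shifted by one.
-/

namespace BBS

section Flag

variable {L : ℤ} {η : ℕ → ℤ} {j : ℕ}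

theorem flag_succ_of_lt (h : η j + η (j + 1) < L) : flag L η (j + 1) = 0 := by
  rw [flag, if_pos h]

theorem flag_succ_of_eq (h : η j + η (j + 1) = L) : flag L η (j + 1) = flag L η j := by
  rw [flag, if_neg h.not_lt, if_pos h]

theorem flag_succ_of_gt (h : L < η j + η (j + 1)) : flag L η (j + 1) = 1 := by
  rw [flag, if_neg h.not_gt, if_neg h.ne']

theorem flag_eq_one_and_succ_eq_zero_iff :
    flag L η j = 1 ∧ flag L η (j + 1) = 0 ↔ flag L η j = 1 ∧ η j + η (j + 1) < L := by
  refine and_congr_right fun hj => ⟨fun hsucc => ?_, flag_succ_of_lt⟩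
  rcases lt_trichotomy (η j + η (j + 1)) L with hlt | heq | hgt
  · exact hlt
  · simp [flag_succ_of_eq heq, hj] at hsucc
  · simp [flag_succ_of_gt hgt] at hsucc

theorem flag_eq_zero_and_succ_eq_one_iff :
    flag L η j = 0 ∧ flag L η (j + 1) = 1 ↔ flag L η j = 0 ∧ L < η j + η (j + 1) := by
  refine and_congr_right fun hj => ⟨fun hsucc => ?_, flag_succ_of_gt⟩
  rcases lt_trichotomy (η j + η (j + 1)) L with hlt | heq | hgt
  · simp [flag_succ_of_lt hlt] at hsucc
  · simp [flag_succ_of_eq heq, hj] at hsucc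
  · exact hgt

theorem flag'_eq_flag_succ (L : ℤ) (η : ℕ → ℤ) (j : ℕ) : flag' L η j = flag L η (j + 1) := by
  induction j with
  | zero => rfl
  | succ j ih => rw [flag', flag, ih]

theorem mem_Iset'_iff : j ∈ Iset' L η ↔ flag L η j = 0 ∧ flag L η (j + 1) = 1 := by
  simp only [Iset', Set.mem_ofPred_eq, flag'_eq_flag_succ]
  cases j <;> simp [flag]

end Flag

/-- The excess `η_j + u_j - L`: by how much box `j` and the carrier arriving there together exceed
the capacity `L`. It is negative when capacity is left over. -/
def excess (L : ℤ) (η : ℕ → ℤ) (j : ℕ) : ℤ := η j + carrier L η j - L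

section Excess

variable {L : ℤ} {η : ℕ → ℤ} {j : ℕ}

theorem excess_zero (L : ℤ) (η : ℕ → ℤ) : excess L η 0 = η 0 - L := by
  simp [excess, carrier, carrierM]

theorem excess_succ (L : ℤ) (η : ℕ → ℤ) (j : ℕ) :
    excess L η (j + 1) = η j + η (j + 1) - L + max 0 (excess L η j) := by
  simp only [excess, carrier, carrierM]
  ring

theorem evol_eq_sub_add_min_excess (L : ℤ) (η : ℕ → ℤ) (j : ℕ) :
    evol L η j = L - η j + min 0 (excess L η j) := by
  simp only [evol, excess]
  omega

theorem evol_add_evol_succ (L : ℤ) (η : ℕ → ℤ) (j : ℕ) :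
    evol L η j + evol L η (j + 1) =
      L + min 0 (excess L η j) + min (L - (η j + η (j + 1))) (max 0 (excess L η j)) := by
  rw [evol_eq_sub_add_min_excess, evol_eq_sub_add_min_excess, excess_succ]
  omega

theorem lt_evol_add_evol_succ_iff :
    L < evol L η j + evol L η (j + 1) ↔ 0 < excess L η j ∧ η j + η (j + 1) < L := by
  rw [evol_add_evol_succ]
  omega

theorem flag_eq_zero_of_excess_nonpos (h : excess L η j ≤ 0) : flag L η j = 0 := by
  induction j with
  | zero => rfl
  | succ j ih =>
    rw [excess_succ] at h
    rcases lt_trichotomy (η j + η (j + 1)) L with hlt | heq | hgt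
    · exact flag_succ_of_lt hlt
    · rw [flag_succ_of_eq heq]
      exact ih (by omega)
    · omega

theorem flag_add_flag_evol (h0 : η 0 ≤ L) (h : 0 < excess L η j) :
    flag L η j + flag L (evol L η) j = 1 := by
  induction j with
  | zero =>
    rw [excess_zero] at h
    omega
  | succ j ih =>
    have hsum := evol_add_evol_succ L η j
    rw [excess_succ] at h
    rcases lt_trichotomy (η j + η (j + 1)) L with hlt | heq | hgt
    · rw [flag_succ_of_lt hlt, flag_succ_of_gt (by omega), zero_add]
    · rw [flag_succ_of_eq heq, flag_succ_of_eq (by omega)]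
      exact ih (by omega)
    · rw [flag_succ_of_gt hgt, flag_succ_of_lt (by omega), add_zero]

end Excess

theorem mem_Iset_iff_mem_Iset'_evol {L : ℤ} {η : ℕ → ℤ} (h0 : η 0 ≤ L) (j : ℕ) :
    j ∈ Iset L η ↔ j ∈ Iset' L (evol L η) := by
  have hpos : flag L η j = 1 → 0 < excess L η j := fun hj => by
    by_contra! hle
    simp [flag_eq_zero_of_excess_nonpos hle] at hj
  have hcompl : 0 < excess L η j → (flag L η j = 1 ↔ flag L (evol L η) j = 0) := fun h => by
    have := flag_add_flag_evol h0 h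
    omega
  calc
    j ∈ Iset L η ↔ flag L η j = 1 ∧ η j + η (j + 1) < L := flag_eq_one_and_succ_eq_zero_iff
    _ ↔ flag L (evol L η) j = 0 ∧ 0 < excess L η j ∧ η j + η (j + 1) < L := by tauto
    _ ↔ flag L (evol L η) j = 0 ∧ L < evol L η j + evol L η (j + 1) := by
      rw [lt_evol_add_evol_succ_iff]
    _ ↔ j ∈ Iset' L (evol L η) := by
      rw [← flag_eq_zero_and_succ_eq_one_iff, mem_Iset'_iff]

end BBS

theorem stmt_5_general (L : ℤ) (η : ℕ → ℤ) (h0 : η 0 ≤ L) :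
    (∀ j : ℕ, (flag L η j = 1 ∧ flag L η (j + 1) = 0) ↔
      ((∀ k, j = k + 1 → flag' L (evol L η) k = 0) ∧ flag' L (evol L η) j = 1)) ∧
    Iset L η = Iset' L (evol L η) :=
  ⟨mem_Iset_iff_mem_Iset'_evol h0, Set.ext (mem_Iset_iff_mem_Iset'_evol h0)⟩

/-- Lemma 2.7: `a(η)_j = 1 ∧ a(η)_{j+1} = 0` iff
`a′(T_L η)_{j-1} = 0 ∧ a′(T_L η)_j = 1`; equivalently `I(η) = I′(T_L(η))`. -/
theorem stmt_5 (L M : ℕ) (hL : 1 ≤ L) (η : ℕ → ℤ) (hη : mem_S L M η) :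
    (∀ j : ℕ, (flag L η j = 1 ∧ flag L η (j + 1) = 0) ↔
      ((∀ k, j = k + 1 → flag' L (evol L η) k = 0) ∧ flag' L (evol L η) j = 1)) ∧
    Iset L η = Iset' L (evol L η) :=
  stmt_5_general L η (hη.2.2.1.trans (Int.natCast_nonneg L))
end
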